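/- Let (A, m) be an excellent Henselian local ring, and suppose every A-algebra morphism from a finite type A-algebra to Â factors through a smooth A-algebra (General Neron Desingularization). Then for every finite type ℤ-subalgebra E of A, the inclusion E → A factors through a regular local ring essentially of finite type over ℤ, provided Â is a filtered inductive limit of regular local rings essentially of finite type over ℤ. -/

import Mathlib

open IsLocalRing

universe u v

/-- The `m`-adic completion of a local ring. -/
noncomputable abbrev AdicCompl (A : Type*) [CommRing A] [IsLocalRing A] :=
  AdicCompletion (maximalIdeal A) A

/-- A regular local ring: a Noetherian local ring whose maximal ideal can be generated by
`d` elements, where `d` is the Krull dimension. -/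
def IsRegularLocal (R : Type*) [CommRing R] [IsLocalRing R] : Prop :=
  IsNoetherianRing R ∧ ∃ s : Finset R,
    Ideal.span (s : Set R) = maximalIdeal R ∧ (s.card : WithBot ℕ∞) = ringKrullDim R

/-! With `k` the residue field of `A`, only the composite `D → Â → k` matters. Base change to `A`
and desingularization replace `D` by a smooth `A`-algebra, over which `k`-points lift to `A`: lift
the coordinates of an étale chart arbitrarily, then the remaining simple root by Hensel's lemma.
The lift has the same residues as `D → Â`, so it inverts the denominators of `D` because `A` is
local. -/

section HenselianLifting

variable {R A : Type*} [CommRing R] [CommRing A] [HenselianLocalRing A] [Algebra R A]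

lemma exists_hasMap_residue_eq (P : StandardEtalePair R) {y : ResidueField A} (hy : P.HasMap y) :
    ∃ a : A, P.HasMap a ∧ residue A a = y := by
  have hensel := ((HenselianLocalRing.TFAE A).out 0 1).mp ‹HenselianLocalRing A›
  obtain ⟨a, ha, rfl⟩ := hensel (P.f.map (algebraMap R A)) (P.monic_f.map _) y
    (by rw [Polynomial.aeval_map_algebraMap, hy.1])
    (by simpa only [Polynomial.derivative_map, Polynomial.aeval_map_algebraMap]
      using hy.isUnit_derivative_f.ne_zero)
  refine ⟨a, ⟨?_, isUnit_of_map_unit (residue A) _ ?_⟩, rfl⟩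
  · rwa [← Polynomial.aeval_map_algebraMap A, Polynomial.coe_aeval_eq_eval]
  · exact Polynomial.aeval_algebraMap_apply (ResidueField A) a P.g ▸ hy.2

lemma exists_algHom_lift_of_isStandardEtale {S : Type*} [CommRing S] [Algebra R S]
    [Algebra.IsStandardEtale R S] (ψ : S →ₐ[R] ResidueField A) :
    ∃ σ : S →ₐ[R] A, (IsScalarTower.toAlgHom R A (ResidueField A)).comp σ = ψ := by
  obtain ⟨P⟩ := Algebra.IsStandardEtale.nonempty_standardEtalePresentation (R := R) (S := S)
  obtain ⟨a, hPa, hay⟩ := exists_hasMap_residue_eq P.P (P.hasMap.map ψ)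
  refine ⟨(P.P.lift a hPa).comp P.equivRing.toAlgHom, P.hom_ext ?_⟩
  simpa using hay

lemma exists_algHom_lift_of_isStandardEtale_mvPolynomial {τ S : Type*} [CommRing S] [Algebra R S]
    [Algebra (MvPolynomial τ R) S] [IsScalarTower R (MvPolynomial τ R) S]
    [Algebra.IsStandardEtale (MvPolynomial τ R) S] (ψ : S →ₐ[R] ResidueField A) :
    ∃ σ : S →ₐ[R] A, (IsScalarTower.toAlgHom R A (ResidueField A)).comp σ = ψ := by
  choose a ha using fun i : τ =>
    residue_surjective (R := A) (ψ (algebraMap (MvPolynomial τ R) S (.X i)))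
  let ev : MvPolynomial τ R →ₐ[R] A := MvPolynomial.aeval a
  have hev : (IsScalarTower.toAlgHom R A (ResidueField A)).comp ev =
      ψ.comp (IsScalarTower.toAlgHom R (MvPolynomial τ R) S) :=
    MvPolynomial.algHom_ext fun i => by simpa [ev] using ha i
  algebraize [ev.toRingHom]
  have : IsScalarTower R (MvPolynomial τ R) A := .of_algHom ev
  let ψ' : S →ₐ[MvPolynomial τ R] ResidueField A :=
    { ψ with commutes' := fun p => congr($hev p).symm }
  obtain ⟨σ, hσ⟩ := exists_algHom_lift_of_isStandardEtale ψ'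
  exact ⟨σ.restrictScalars R, AlgHom.ext fun x => congr($hσ x)⟩

lemma exists_algHom_lift_of_smooth {C : Type*} [CommRing C] [Algebra R C] [Algebra.Smooth R C]
    (ψ : C →ₐ[R] ResidueField A) :
    ∃ σ : C →ₐ[R] A, (IsScalarTower.toAlgHom R A (ResidueField A)).comp σ = ψ := by
  have : (RingHom.ker ψ).IsPrime := RingHom.ker_isPrime _
  obtain ⟨g, hg, n, _, _, _⟩ := Algebra.IsSmoothAt.exists_isStandardEtale_mvPolynomial
    (R := R) (p := RingHom.ker ψ)
  have hψg : IsUnit (ψ g) := isUnit_iff_ne_zero.mpr hg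
  let ψg : Localization.Away g →ₐ[R] ResidueField A := IsLocalization.Away.liftAlgHom g hψg
  have hψg_comp : ψg.comp (IsScalarTower.toAlgHom R C (Localization.Away g)) = ψ :=
    AlgHom.ext fun x => by simp [ψg]
  obtain ⟨σ, hσ⟩ := exists_algHom_lift_of_isStandardEtale_mvPolynomial (τ := Fin n) ψg
  exact ⟨σ.comp (IsScalarTower.toAlgHom R C (Localization.Away g)),
    by rw [← AlgHom.comp_assoc, hσ, hψg_comp]⟩

end HenselianLifting

/-- General Néron Desingularization for the `A`-algebra `T`: every morphism to `T` from an
`A`-algebra of finite type factors through a smooth `A`-algebra. -/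
def HasNeronDesingularization (A : Type u) (T : Type v) [CommRing A] [CommRing T] [Algebra A T] :
    Prop :=
  ∀ (B : Type u) [CommRing B] [Algebra A B], Algebra.FiniteType A B →
    ∀ v : B →ₐ[A] T, ∃ (C : Type u) (_ : CommRing C) (_ : Algebra A C),
      Algebra.Smooth A C ∧ ∃ (s : B →ₐ[A] C) (t : C →ₐ[A] T), t.comp s = v

namespace HasNeronDesingularization

variable {A : Type u} {T : Type v} [CommRing A] [HenselianLocalRing A] [CommRing T] [Algebra A T]
  (hAT : HasNeronDesingularization A T) (π : T →ₐ[A] ResidueField A)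

include hAT

lemma exists_algHom_approx {B : Type u} [CommRing B] [Algebra A B] [Algebra.FiniteType A B]
    (v : B →ₐ[A] T) : ∃ ρ : B →ₐ[A] A, (Algebra.ofId A (ResidueField A)).comp ρ = π.comp v := by
  obtain ⟨C, _, _, _, s, t, rfl⟩ := hAT B inferInstance v
  obtain ⟨σ, hσ⟩ := exists_algHom_lift_of_smooth (π.comp t)
  refine ⟨σ.comp s, ?_⟩
  rw [← AlgHom.comp_assoc, ← AlgHom.comp_assoc, ← hσ]
  rfl

variable {E : Type*} [CommRing E] [Algebra E A] [Algebra E T] [IsScalarTower E A T]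
  {D : Type u} [CommRing D] [Algebra E D]

lemma exists_algHom_approx_of_finiteType [Algebra.FiniteType E D] (v : D →ₐ[E] T) :
    ∃ ρ : D →ₐ[E] A, ∀ d, residue A (ρ d) = π (v d) := by
  let vA : TensorProduct E A D →ₐ[A] T :=
    Algebra.TensorProduct.lift (Algebra.ofId A T) v fun _ _ => .all _ _
  obtain ⟨ρ, hρ⟩ := hAT.exists_algHom_approx π vA
  refine ⟨(ρ.restrictScalars E).comp Algebra.TensorProduct.includeRight, fun d => ?_⟩
  have hvA : vA (Algebra.TensorProduct.includeRight d) = v d := by simp [vA]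
  exact congr($hρ (Algebra.TensorProduct.includeRight d)).trans congr(π $hvA)

lemma exists_algHom_approx_of_essFiniteType [Algebra.EssFiniteType E D] (v : D →ₐ[E] T) :
    ∃ ρ : D →ₐ[E] A, ∀ d, residue A (ρ d) = π (v d) := by
  let D₀ := Algebra.EssFiniteType.subalgebra E D
  let M := Algebra.EssFiniteType.submonoid E D
  obtain ⟨ρ₀, hρ₀⟩ := hAT.exists_algHom_approx_of_finiteType π (v.comp D₀.val)
  have isUnit_ρ₀ (d : M) : IsUnit (ρ₀ d) := by
    have hd : IsUnit (d : D₀).1 := d.2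
    refine isUnit_of_map_unit (residue A) _ ?_
    rw [hρ₀]
    exact (hd.map v).map π
  let ρ : D →ₐ[E] A := IsLocalization.liftAlgHom (M := M) isUnit_ρ₀
  have hρ : (residue A).comp (ρ : D →+* A) = (π : T →+* ResidueField A).comp v :=
    IsLocalization.ringHom_ext M <| RingHom.ext fun d =>
      congr(residue A $(IsLocalization.lift_eq isUnit_ρ₀ d)).trans (hρ₀ d)
  exact ⟨ρ, fun d => congr($hρ d)⟩

end HasNeronDesingularization

section DirectLimit

variable {ι : Type*} [Preorder ι] [IsDirected ι (· ≤ ·)] {G : ι → Type*} [∀ i, CommRing (G i)]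

lemma exists_le_ker_of_le_ker_of_comp {f : ∀ i j : ι, i ≤ j → G i →+* G j}
    [DirectedSystem G fun i j h => f i j h] {S : Type*} [CommRing S] {I : Ideal S} (hI : I.FG)
    {j : ι} (γ : S →+* G j)
    (hIγ : I ≤ RingHom.ker ((Ring.DirectLimit.of G (fun i j h => f i j h) j).comp γ)) :
    ∃ (k : ι) (hjk : j ≤ k), I ≤ RingHom.ker ((f j k hjk).comp γ) := by
  have : Nonempty ι := ⟨j⟩
  induction I, hI using Submodule.fg_induction with
  | singleton x =>
    obtain ⟨k, hjk, hx⟩ := Ring.DirectLimit.of.zero_exact (hIγ (Ideal.mem_span_singleton_self x))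
    exact ⟨k, hjk, (Ideal.span_singleton_le_iff_mem _).mpr hx⟩
  | sup I₁ I₂ _ _ ih₁ ih₂ =>
    obtain ⟨k₁, hjk₁, h₁⟩ := ih₁ (le_sup_left.trans hIγ)
    obtain ⟨k₂, hjk₂, h₂⟩ := ih₂ (le_sup_right.trans hIγ)
    obtain ⟨k, hk₁, hk₂⟩ := exists_ge_ge k₁ k₂
    have ker_mono {l : ι} (hjl : j ≤ l) (hlk : l ≤ k) :
        RingHom.ker ((f j l hjl).comp γ) ≤ RingHom.ker ((f j k (hjl.trans hlk)).comp γ) :=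
      fun x hx => by
        rw [RingHom.mem_ker, RingHom.comp_apply] at hx ⊢
        rw [← DirectedSystem.map_map (f := fun i j h => f i j h) hjl hlk, hx, map_zero]
    exact ⟨k, hjk₁.trans hk₁, sup_le (h₁.trans (ker_mono hjk₁ hk₁)) (h₂.trans (ker_mono hjk₂ hk₂))⟩

variable [Nonempty ι] {R : Type*} [CommRing R] [∀ i, Algebra R (G i)]
  {f : ∀ i j : ι, i ≤ j → G i →ₐ[R] G j}

lemma exists_algHom_of_comp_eq_of_mvPolynomial {τ : Type*} [Finite τ]
    (w : MvPolynomial τ R →+* Ring.DirectLimit G fun i j h => f i j h)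
    (hw : ∀ i, w.comp (algebraMap R _) = (Ring.DirectLimit.of G _ i).comp (algebraMap R (G i))) :
    ∃ (j : ι) (γ : MvPolynomial τ R →ₐ[R] G j), (Ring.DirectLimit.of G _ j).comp γ = w := by
  choose i x hx using fun k : τ => Ring.DirectLimit.exists_of (w (.X k))
  obtain ⟨j, hj⟩ := (Set.finite_range i).bddAbove
  have hij (k : τ) : i k ≤ j := hj ⟨k, rfl⟩
  refine ⟨j, MvPolynomial.aeval fun k => f (i k) j (hij k) (x k), MvPolynomial.ringHom_ext ?_ ?_⟩
  · intro r
    simpa using congr($(hw j) r).symm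
  · intro k
    simp [hx]

lemma exists_algHom_of_comp_eq_of_finitePresentation [DirectedSystem G fun i j h => f i j h]
    {E : Type*} [CommRing E] [Algebra R E] [Algebra.FinitePresentation R E]
    (w : E →+* Ring.DirectLimit G fun i j h => f i j h)
    (hw : ∀ i, w.comp (algebraMap R E) = (Ring.DirectLimit.of G _ i).comp (algebraMap R (G i))) :
    ∃ (i : ι) (α : E →ₐ[R] G i), (Ring.DirectLimit.of G _ i).comp α = w := by
  obtain ⟨n, p, p_surjective, ker_fg⟩ := Algebra.FinitePresentation.out (R := R) (A := E)
  obtain ⟨j, γ, hγ⟩ := exists_algHom_of_comp_eq_of_mvPolynomial (f := f)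
    (w.comp (p : MvPolynomial (Fin n) R →+* E)) fun i => by
      rw [RingHom.comp_assoc, p.comp_algebraMap, hw i]
  have : DirectedSystem G fun i j h => (f i j h : G i →+* G j) := ‹_›
  obtain ⟨k, hjk, hker⟩ := exists_le_ker_of_le_ker_of_comp
    (f := fun i j h => (f i j h : G i →+* G j)) ker_fg (γ : _ →+* G j) fun x hx =>
      congr($hγ x).trans (congr(w $hx).trans (map_zero w))
  let α : E →ₐ[R] G k := AlgHom.liftOfSurjective p p_surjective ((f j k hjk).comp γ) hker
  have hα (q) : α (p q) = f j k hjk (γ q) := AlgHom.liftOfSurjective_apply ..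
  refine ⟨k, α, RingHom.ext fun y => ?_⟩
  obtain ⟨q, rfl⟩ := p_surjective y
  calc Ring.DirectLimit.of G _ k (α (p q))
      = Ring.DirectLimit.of G _ k (f j k hjk (γ q)) := by rw [hα]
    _ = Ring.DirectLimit.of G _ j (γ q) := Ring.DirectLimit.of_f hjk (γ q)
    _ = w (p q) := congr($hγ q)

end DirectLimit

theorem factor_through_regular_of_GND_general {R : Type*} [CommRing R]
    {A : Type u} [CommRing A] [HenselianLocalRing A] [Algebra R A]
    {T : Type*} [CommRing T] [Algebra R T] [Algebra A T] [IsScalarTower R A T]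
    (hAT : HasNeronDesingularization A T) (π : T →ₐ[A] ResidueField A)
    {ι : Type*} [Preorder ι] [IsDirected ι (· ≤ ·)] [Nonempty ι]
    {G : ι → Type u} [∀ i, CommRing (G i)] [∀ i, Algebra R (G i)]
    [∀ i, Algebra.EssFiniteType R (G i)]
    (f : ∀ i j : ι, i ≤ j → G i →ₐ[R] G j) [DirectedSystem G fun i j h => f i j h]
    (e : T ≃+* Ring.DirectLimit G fun i j h => f i j h)
    (he : ∀ i r, e (algebraMap R T r) = Ring.DirectLimit.of G _ i (algebraMap R (G i) r))
    {E : Type*} [CommRing E] [Algebra R E] [Algebra.FinitePresentation R E] (φ : E →ₐ[R] A) :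
    ∃ (i : ι) (α : E →ₐ[R] G i) (β : G i →ₐ[R] A), β.comp α = φ := by
  let w : E →+* Ring.DirectLimit G fun i j h => f i j h :=
    (e : T →+* _).comp ((algebraMap A T).comp φ)
  obtain ⟨i, α, hα⟩ := exists_algHom_of_comp_eq_of_finitePresentation (f := f) w fun i =>
    RingHom.ext fun r => by simp [w, ← he, ← IsScalarTower.algebraMap_apply]
  algebraize [φ.toRingHom, α.toRingHom, (algebraMap A T).comp φ.toRingHom]
  have : Algebra.EssFiniteType E (G i) := .of_comp R E (G i)
  let v : G i →ₐ[E] T :=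
    { (e.symm : _ →+* T).comp (Ring.DirectLimit.of G (fun i j h => f i j h) i) with
      commutes' := fun x => e.symm_apply_eq.mpr congr($hα x) }
  obtain ⟨β, -⟩ := hAT.exists_algHom_approx_of_essFiniteType π v
  exact ⟨i, α, β.restrictScalars R, AlgHom.ext β.commutes⟩

/-- Let `(A,m)` be an excellent Henselian local ring satisfying General Neron
Desingularization (every `A`-morphism from a finite type `A`-algebra to `Â` factors through
a smooth `A`-algebra), and suppose `Â` is a filtered inductive limit of regular local rings
essentially of finite type over `ℤ`. Then for every finite type `ℤ`-subalgebra `E` of `A`,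
the inclusion `E → A` factors through a regular local ring essentially of finite type
over `ℤ`. -/
theorem factor_through_regular_of_GND (A : Type u) [CommRing A] [IsLocalRing A]
    [IsNoetherianRing A] [HenselianLocalRing A]
    (hGND : ∀ (B : Type u) [CommRing B] [Algebra A B], Algebra.FiniteType A B →
      ∀ v : B →ₐ[A] AdicCompl A, ∃ (C : Type u) (_ : CommRing C) (_ : Algebra A C),
        Algebra.Smooth A C ∧ ∃ (s : B →ₐ[A] C) (t : C →ₐ[A] AdicCompl A), t.comp s = v)
    (ι : Type v) [Preorder ι] [IsDirected ι (· ≤ ·)] [Nonempty ι]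
    (G : ι → Type u) [∀ i, CommRing (G i)] [∀ i, IsLocalRing (G i)]
    (hGreg : ∀ i, IsRegularLocal (G i))
    (hGess : ∀ i, Algebra.EssFiniteType ℤ (G i))
    (f : ∀ i j : ι, i ≤ j → G i →+* G j)
    [DirectedSystem G fun i j h => f i j h]
    (e : AdicCompl A ≃+* Ring.DirectLimit G fun i j h => f i j h)
    (E : Subring A) (hE : Algebra.FiniteType ℤ E) :
    ∃ (D : Type u) (_ : CommRing D) (_ : IsLocalRing D), IsRegularLocal D ∧
      Algebra.EssFiniteType ℤ D ∧
      ∃ (α : E →+* D) (β : D →+* A), β.comp α = E.subtype := by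
  have := Algebra.FinitePresentation.of_finiteType.mp hE
  have : DirectedSystem G fun i j h => (f i j h).toIntAlgHom := ‹_›
  obtain ⟨i, α, β, h⟩ := factor_through_regular_of_GND_general (R := ℤ) hGND
    (AdicCompletion.evalOneₐ (maximalIdeal A)) (fun i j h => (f i j h).toIntAlgHom) e
    (fun _ _ => (map_intCast e _).trans (map_intCast _ _).symm) E.subtype.toIntAlgHom
  exact ⟨G i, inferInstance, inferInstance, hGreg i, hGess i, α, β, congr(($h : E →+* A))⟩
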